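/- arXiv:1712.02580 — 4 statements merged into one kernel-verified Lean document; each statement's English description precedes it below -/
import Mathlib

section
/- Let T₁ be a bounded linear operator on a complex Banach space X₁ and T₂ a bounded linear operator on a complex Banach space X₂, and let T₁ ⊕ T₂ denote the direct sum operator (x₁, x₂) ↦ (T₁x₁, T₂x₂) on the product Banach space X₁ × X₂. Then S_LY(T₁ ⊕ T₂) = S_LY(T₁) ∪ S_LY(T₂). -/
open Filter

noncomputable section

/-- A bounded linear operator `T` is Li-Yorke chaotic if it admits an uncountable scrambled
set `Γ`: for every pair of distinct points `x, y ∈ Γ`,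
`limsup ‖Tⁿx − Tⁿy‖ > 0` and `liminf ‖Tⁿx − Tⁿy‖ = 0`. -/
def LiYorkeChaotic {X : Type*} [NormedAddCommGroup X] [NormedSpace ℂ X]
    (T : X →L[ℂ] X) : Prop :=
  ∃ Γ : Set X, ¬ Γ.Countable ∧ ∀ x ∈ Γ, ∀ y ∈ Γ, x ≠ y →
    0 < Filter.atTop.limsup (fun n => (‖(T ^ n) x - (T ^ n) y‖₊ : ENNReal)) ∧
    Filter.atTop.liminf (fun n => (‖(T ^ n) x - (T ^ n) y‖₊ : ENNReal)) = 0

/-- The Li-Yorke chaos translation set of `T`: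
`S_LY(T) = {λ ∈ ℂ : λ·I + T is Li-Yorke chaotic}`. -/
def SLY {X : Type*} [NormedAddCommGroup X] [NormedSpace ℂ X]
    (T : X →L[ℂ] X) : Set ℂ :=
  {z : ℂ | LiYorkeChaotic (z • (1 : X →L[ℂ] X) + T)}

/-
A linear operator is Li-Yorke chaotic exactly when it has a semi-irregular vector: the difference of
two points of a scrambled set is one, and conversely the complex line through one is scrambled.
In the maximum norm of a product, an orbit that comes close to zero infinitely often does so in both
coordinates, while the limsup of the norms is the larger of the two coordinate limsups. Hence one of
the coordinates of a semi-irregular vector of `T ⊕ S` is itself semi-irregular.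
-/

section SemiIrregular

variable {R X : Type*} [Semiring R] [SeminormedAddCommGroup X] [Module R X]

/-- A vector is *semi-irregular* for `T` if its orbit accumulates at zero without converging to
zero. Such vectors are the linear counterpart of Li-Yorke pairs. The limits are taken in `ℝ≥0∞`, so
that the limsup of an unbounded orbit is `∞`. -/
def IsSemiIrregular (T : X →L[R] X) (x : X) : Prop :=
  0 < limsup (fun n ↦ ‖(T ^ n) x‖ₑ) atTop ∧ liminf (fun n ↦ ‖(T ^ n) x‖ₑ) atTop = 0

theorem isSemiIrregular_sub_iff {T : X →L[R] X} {x y : X} :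
    IsSemiIrregular T (x - y) ↔
      0 < limsup (fun n ↦ ‖(T ^ n) x - (T ^ n) y‖ₑ) atTop ∧
        liminf (fun n ↦ ‖(T ^ n) x - (T ^ n) y‖ₑ) atTop = 0 := by
  simp only [IsSemiIrregular, map_sub]

theorem IsSemiIrregular.ne_zero {T : X →L[R] X} {x : X} (hx : IsSemiIrregular T x) : x ≠ 0 := by
  rintro rfl
  simp [IsSemiIrregular, enorm_eq_nnnorm] at hx

end SemiIrregular

theorem IsSemiIrregular.smul {𝕜 X : Type*} [NormedDivisionRing 𝕜] [SeminormedAddCommGroup X]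
    [Module 𝕜 X] [NormSMulClass 𝕜 X] {T : X →L[𝕜] X} {x : X} (hx : IsSemiIrregular T x) {c : 𝕜}
    (hc : c ≠ 0) : IsSemiIrregular T (c • x) := by
  have hpos : 0 < ‖c‖ₑ := enorm_pos.2 hc
  simp only [IsSemiIrregular, map_smul, enorm_smul,
    ENNReal.limsup_const_mul_of_ne_top enorm_ne_top,
    ENNReal.liminf_const_mul_of_ne_top enorm_ne_top]
  exact ⟨ENNReal.mul_pos hpos.ne' hx.1.ne', by rw [hx.2, mul_zero]⟩

theorem liYorkeChaotic_iff_exists_isSemiIrregular {X : Type*} [NormedAddCommGroup X]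
    [NormedSpace ℂ X] {T : X →L[ℂ] X} :
    LiYorkeChaotic T ↔ ∃ x, IsSemiIrregular T x := by
  constructor
  · rintro ⟨Γ, hΓ, hpair⟩
    obtain ⟨x, hx, y, hy, hxy⟩ := Set.not_subsingleton_iff.1 fun h ↦ hΓ h.countable
    exact ⟨x - y, isSemiIrregular_sub_iff.2 (hpair x hx y hy hxy)⟩
  · rintro ⟨x, hx⟩
    have hinj : Function.Injective fun c : ℂ ↦ c • x := smul_left_injective ℂ hx.ne_zero
    refine ⟨Set.range fun c : ℂ ↦ c • x, fun hcount ↦ ?_, ?_⟩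
    · rw [← Set.image_univ] at hcount
      exact not_countable_complex (Set.countable_of_injective_of_countable_image hinj.injOn hcount)
    · rintro _ ⟨a, rfl⟩ _ ⟨b, rfl⟩ hab
      have hsub : a - b ≠ 0 := sub_ne_zero.2 fun h ↦ hab (congrArg (· • x) h)
      have hline : IsSemiIrregular T (a • x - b • x) := sub_smul a b x ▸ hx.smul hsub
      exact isSemiIrregular_sub_iff.1 hline

section ProdMap

variable {R X Y : Type*} [Semiring R]

theorem smul_one_add_prodMap [AddCommMonoid X] [TopologicalSpace X] [ContinuousAdd X] [Module R X]
    [AddCommMonoid Y] [TopologicalSpace Y] [ContinuousAdd Y] [Module R Y]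
    {M : Type*} [Monoid M] [DistribMulAction M X] [ContinuousConstSMul M X] [SMulCommClass R M X]
    [DistribMulAction M Y] [ContinuousConstSMul M Y] [SMulCommClass R M Y]
    (c : M) (T : X →L[R] X) (S : Y →L[R] Y) :
    c • (1 : X × Y →L[R] X × Y) + T.prodMap S = (c • 1 + T).prodMap (c • 1 + S) :=
  rfl

theorem prodMap_pow [AddCommMonoid X] [TopologicalSpace X] [Module R X]
    [AddCommMonoid Y] [TopologicalSpace Y] [Module R Y]
    (T : X →L[R] X) (S : Y →L[R] Y) (n : ℕ) :
    T.prodMap S ^ n = (T ^ n).prodMap (S ^ n) :=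
  DFunLike.coe_injective <| by
    simp only [FunLike.coe_pow_eq_iterate, ContinuousLinearMap.coe_prodMap', Prod.map_iterate]

variable [SeminormedAddCommGroup X] [Module R X] [SeminormedAddCommGroup Y] [Module R Y]

theorem enorm_prodMap_pow_apply (T : X →L[R] X) (S : Y →L[R] Y) (n : ℕ) (p : X × Y) :
    ‖(T.prodMap S ^ n) p‖ₑ = max ‖(T ^ n) p.1‖ₑ ‖(S ^ n) p.2‖ₑ := by
  simp only [prodMap_pow, ContinuousLinearMap.coe_prodMap', Prod.map_apply', enorm_eq_nnnorm,
    Prod.nnnorm_mk, ENNReal.coe_max]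

variable {T : X →L[R] X} {S : Y →L[R] Y}

theorem isSemiIrregular_prodMap_inl_iff {x : X} :
    IsSemiIrregular (T.prodMap S) (x, 0) ↔ IsSemiIrregular T x := by
  have hzero : ‖(0 : Y)‖ₑ = 0 := by rw [enorm_eq_nnnorm, nnnorm_zero, ENNReal.coe_zero]
  simp only [IsSemiIrregular, enorm_prodMap_pow_apply, map_zero, hzero, max_zero]

theorem isSemiIrregular_prodMap_inr_iff {y : Y} :
    IsSemiIrregular (T.prodMap S) (0, y) ↔ IsSemiIrregular S y := by
  have hzero : ‖(0 : X)‖ₑ = 0 := by rw [enorm_eq_nnnorm, nnnorm_zero, ENNReal.coe_zero]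
  simp only [IsSemiIrregular, enorm_prodMap_pow_apply, map_zero, hzero, zero_max]

theorem IsSemiIrregular.fst_or_snd {p : X × Y} (hp : IsSemiIrregular (T.prodMap S) p) :
    IsSemiIrregular T p.1 ∨ IsSemiIrregular S p.2 := by
  obtain ⟨hlimsup, hliminf⟩ := hp
  simp only [enorm_prodMap_pow_apply] at hlimsup hliminf
  have hfst : liminf (fun n ↦ ‖(T ^ n) p.1‖ₑ) atTop = 0 :=
    nonpos_iff_eq_zero.1 <| hliminf ▸ liminf_le_liminf (.of_forall fun _ ↦ le_max_left _ _)
  have hsnd : liminf (fun n ↦ ‖(S ^ n) p.2‖ₑ) atTop = 0 :=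
    nonpos_iff_eq_zero.1 <| hliminf ▸ liminf_le_liminf (.of_forall fun _ ↦ le_max_right _ _)
  rw [limsup_max, lt_max_iff] at hlimsup
  exact hlimsup.imp (⟨·, hfst⟩) (⟨·, hsnd⟩)

end ProdMap

section NormedSpace

variable {X Y : Type*} [NormedAddCommGroup X] [NormedSpace ℂ X] [NormedAddCommGroup Y]
  [NormedSpace ℂ Y]

theorem liYorkeChaotic_prodMap_iff {T : X →L[ℂ] X} {S : Y →L[ℂ] Y} :
    LiYorkeChaotic (T.prodMap S) ↔ LiYorkeChaotic T ∨ LiYorkeChaotic S := by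
  simp only [liYorkeChaotic_iff_exists_isSemiIrregular]
  constructor
  · rintro ⟨p, hp⟩
    exact hp.fst_or_snd.imp (⟨p.1, ·⟩) (⟨p.2, ·⟩)
  · rintro (⟨x, hx⟩ | ⟨y, hy⟩)
    · exact ⟨(x, 0), isSemiIrregular_prodMap_inl_iff.2 hx⟩
    · exact ⟨(0, y), isSemiIrregular_prodMap_inr_iff.2 hy⟩

theorem SLY_prodMap_general (T : X →L[ℂ] X) (S : Y →L[ℂ] Y) :
    SLY (T.prodMap S) = SLY T ∪ SLY S := by
  ext z
  change LiYorkeChaotic (z • 1 + T.prodMap S) ↔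
    LiYorkeChaotic (z • 1 + T) ∨ LiYorkeChaotic (z • 1 + S)
  rw [smul_one_add_prodMap, liYorkeChaotic_prodMap_iff]

end NormedSpace

theorem SLY_prodMap {X₁ X₂ : Type*} [NormedAddCommGroup X₁] [NormedSpace ℂ X₁]
    [CompleteSpace X₁] [NormedAddCommGroup X₂] [NormedSpace ℂ X₂] [CompleteSpace X₂]
    (T₁ : X₁ →L[ℂ] X₁) (T₂ : X₂ →L[ℂ] X₂) :
    SLY (T₁.prodMap T₂) = SLY T₁ ∪ SLY T₂ :=
  SLY_prodMap_general T₁ T₂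
end
end

section
/- If T is a normal bounded linear operator (i.e. T*T = TT*) on a separable complex Hilbert space H, then S_LY(T) = ∅; that is, λ·I + T is not Li-Yorke chaotic for any λ ∈ ℂ. -/
open Filter

noncomputable section

/-!
An operator `T` is hyponormal if `T T* ≤ T* T`, equivalently `‖T* x‖ ≤ ‖T x‖` for all `x`. The
self-commutator `T* T - T T*` does not change when a scalar is added to `T`, so it suffices to show
that no hyponormal operator is Li-Yorke chaotic. By Cauchy-Schwarz,
`‖T x‖² = ⟪T* T x, x⟫ ≤ ‖T* T x‖ ‖x‖ ≤ ‖T² x‖ ‖x‖`, so the sequence `‖Tⁿ x‖` is log-convex: as soon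
as it increases once it increases forever. Hence either it stays away from `0` or it is decreasing,
and in both cases it cannot have lower limit `0` and positive upper limit.
-/

open scoped NNReal ENNReal

section LogConvexSequence

variable {R : Type*} [Semiring R] [LinearOrder R] [IsStrictOrderedRing R]

theorem lt_of_sq_le_mul_of_lt {x y z : R} (hx : 0 ≤ x) (h : y ^ 2 ≤ x * z) (hxy : x < y) :
    y < z := by
  by_contra! hzy
  have hlt : x * z < y ^ 2 := calc
    x * z ≤ x * y := mul_le_mul_of_nonneg_left hzy hx
    _ < y * y := mul_lt_mul_of_pos_right hxy (hx.trans_lt hxy)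
    _ = y ^ 2 := (sq y).symm
  exact hlt.not_ge h

variable {a : ℕ → R} (ha : ∀ n, 0 ≤ a n) (hconv : ∀ n, a (n + 1) ^ 2 ≤ a n * a (n + 2))

include ha hconv

theorem lt_succ_of_sq_le_mul {k : ℕ} (hk : a k < a (k + 1)) : ∀ n ≥ k, a n < a (n + 1) := by
  intro n hn
  induction n, hn using Nat.le_induction with
  | base => exact hk
  | succ n _ ih => exact lt_of_sq_le_mul_of_lt (ha n) (hconv n) ih

theorem antitone_or_eventually_ge_of_sq_le_mul :
    Antitone a ∨ ∃ c > 0, ∀ᶠ n in atTop, c ≤ a n := by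
  refine or_iff_not_imp_left.mpr fun hanti ↦ ?_
  obtain ⟨k, hk⟩ : ∃ k, a k < a (k + 1) := by
    contrapose! hanti
    exact antitone_nat_of_succ_le hanti
  have hmono : MonotoneOn a (Set.Ici k) :=
    monotoneOn_nat_Ici_of_le_succ fun n hn ↦ (lt_succ_of_sq_le_mul ha hconv hk n hn).le
  refine ⟨a (k + 1), (ha k).trans_lt hk, ?_⟩
  filter_upwards [eventually_ge_atTop (k + 1)] with n hn
  exact hmono k.le_succ (k.le_succ.trans hn) hn

end LogConvexSequence

theorem limsup_eq_zero_of_sq_le_mul {a : ℕ → ℝ≥0}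
    (hconv : ∀ n, a (n + 1) ^ 2 ≤ a n * a (n + 2))
    (hliminf : atTop.liminf (fun n ↦ (a n : ℝ≥0∞)) = 0) :
    atTop.limsup (fun n ↦ (a n : ℝ≥0∞)) = 0 := by
  obtain hanti | ⟨c, hc, hle⟩ := antitone_or_eventually_ge_of_sq_le_mul (fun n ↦ zero_le) hconv
  · have htendsto := tendsto_atTop_iInf (ENNReal.coe_mono.comp_antitone hanti)
    exact htendsto.limsup_eq.trans (htendsto.liminf_eq.symm.trans hliminf)
  · have hc_le : (c : ℝ≥0∞) ≤ atTop.liminf (fun n ↦ (a n : ℝ≥0∞)) :=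
      le_liminf_of_le (h := hle.mono fun n hn ↦ ENNReal.coe_le_coe.mpr hn)
    rw [hliminf, nonpos_iff_eq_zero, ENNReal.coe_eq_zero] at hc_le
    exact absurd hc_le hc.ne'

/-- Paranormal operators on a normed space: those whose orbits have log-convex norms. The usual
normalization `‖x‖ = 1` is dropped. -/
def IsParanormal {𝕜 E : Type*} [NormedField 𝕜] [SeminormedAddCommGroup E] [NormedSpace 𝕜 E]
    (T : E →L[𝕜] E) : Prop :=
  ∀ x, ‖T x‖ ^ 2 ≤ ‖x‖ * ‖T (T x)‖

namespace IsParanormal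

theorem nnnorm_pow_succ_apply_sq_le {𝕜 E : Type*} [NormedField 𝕜] [SeminormedAddCommGroup E]
    [NormedSpace 𝕜 E] {T : E →L[𝕜] E} (hT : IsParanormal T) (x : E) (n : ℕ) :
    ‖(T ^ (n + 1)) x‖₊ ^ 2 ≤ ‖(T ^ n) x‖₊ * ‖(T ^ (n + 2)) x‖₊ := by
  rw [pow_succ' T (n + 1), pow_succ' T n]
  exact hT ((T ^ n) x)

theorem not_liYorkeChaotic {X : Type*} [NormedAddCommGroup X] [NormedSpace ℂ X]
    {T : X →L[ℂ] X} (hT : IsParanormal T) : ¬ LiYorkeChaotic T := by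
  rintro ⟨Γ, hΓ, hscrambled⟩
  obtain ⟨x, hx, y, hy, hxy⟩ : Γ.Nontrivial :=
    Set.not_subsingleton_iff.mp fun hsub ↦ hΓ hsub.countable
  obtain ⟨hlimsup, hliminf⟩ := hscrambled x hx y hy hxy
  simp only [← map_sub] at hlimsup hliminf
  exact hlimsup.ne' (limsup_eq_zero_of_sq_le_mul (hT.nnnorm_pow_succ_apply_sq_le (x - y)) hliminf)

end IsParanormal

/-- Hyponormal elements of an ordered star algebra, a class that contains the normal ones and is
stable under adding scalars. For bounded operators on a Hilbert space the order is the Loewner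
order, which gives the usual notion of a hyponormal operator. -/
def IsHyponormal {A : Type*} [Mul A] [Star A] [LE A] (a : A) : Prop :=
  a * star a ≤ star a * a

namespace IsHyponormal

theorem of_isStarNormal {A : Type*} [Mul A] [Star A] [Preorder A] {a : A} (ha : IsStarNormal a) :
    IsHyponormal a :=
  ha.star_comm_self.eq.ge

theorem smul_one_add {R A : Type*} [CommSemiring R] [StarRing R] [Ring A] [StarRing A]
    [Algebra R A] [StarModule R A] [PartialOrder A] [IsOrderedAddMonoid A] {a : A}
    (ha : IsHyponormal a) (r : R) : IsHyponormal (r • (1 : A) + a) := by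
  have hcomm : star (r • (1 : A) + a) * (r • (1 : A) + a) - (r • (1 : A) + a) * star (r • 1 + a) =
      star a * a - a * star a := by
    simp only [star_add, star_smul, star_one, add_mul, mul_add, smul_mul_assoc, mul_smul_comm,
      one_mul, mul_one, smul_add, smul_comm r (star r)]
    abel
  rw [IsHyponormal, ← sub_nonneg, hcomm]
  exact sub_nonneg.mpr ha

section Hilbert

open ContinuousLinearMap

variable {𝕜 E : Type*} [RCLike 𝕜] [NormedAddCommGroup E] [InnerProductSpace 𝕜 E] [CompleteSpace E]
  {T : E →L[𝕜] E}

theorem norm_adjoint_apply_le (hT : IsHyponormal T) (x : E) : ‖adjoint T x‖ ≤ ‖T x‖ := by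
  have hinner : 0 ≤ RCLike.re (inner 𝕜 ((adjoint T ∘L T - T ∘L adjoint T) x) x) :=
    ((le_def _ _).mp hT).re_inner_nonneg_left x
  have hadjoint := apply_norm_sq_eq_inner_adjoint_left (adjoint T) x
  rw [adjoint_adjoint] at hadjoint
  rw [sub_apply, inner_sub_left, map_sub, ← apply_norm_sq_eq_inner_adjoint_left, ← hadjoint,
    sub_nonneg] at hinner
  exact le_of_sq_le_sq hinner (norm_nonneg _)

theorem isParanormal (hT : IsHyponormal T) : IsParanormal T := fun x ↦ calc
  ‖T x‖ ^ 2 = RCLike.re (inner 𝕜 x (adjoint T (T x))) := apply_norm_sq_eq_inner_adjoint_right T x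
  _ ≤ ‖x‖ * ‖adjoint T (T x)‖ := re_inner_le_norm x _
  _ ≤ ‖x‖ * ‖T (T x)‖ :=
    mul_le_mul_of_nonneg_left (hT.norm_adjoint_apply_le (T x)) (norm_nonneg x)

end Hilbert

end IsHyponormal

theorem SLY_normal_eq_empty_general {H : Type*} [NormedAddCommGroup H] [InnerProductSpace ℂ H]
    [CompleteSpace H] {T : H →L[ℂ] H} (hT : IsHyponormal T) : SLY T = ∅ :=
  Set.eq_empty_of_forall_notMem fun z ↦ (hT.smul_one_add z).isParanormal.not_liYorkeChaotic

theorem SLY_normal_eq_empty {H : Type*} [NormedAddCommGroup H] [InnerProductSpace ℂ H]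
    [CompleteSpace H] [TopologicalSpace.SeparableSpace H] (T : H →L[ℂ] H)
    (hnormal : (ContinuousLinearMap.adjoint T) ∘L T = T ∘L (ContinuousLinearMap.adjoint T)) :
    SLY T = ∅ :=
  SLY_normal_eq_empty_general (.of_isStarNormal ⟨hnormal⟩)
end
end

section
/- Let T be the unilateral forward shift on the complex Hilbert space ℓ²(ℕ), i.e. the bounded linear operator with T(x₁, x₂, x₃, …) = (0, x₁, x₂, …). Then S_LY(2T) = ∅; that is, λ·I + 2T is not Li-Yorke chaotic for any λ ∈ ℂ. -/
/-!
Let `T` be bounded below by `1` with `⋂ₙ range (T ^ n) = 0`, let `2 ≤ ‖μ‖`, and put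
`A = z • 1 + μ • T`. Then the orbit under `A` of a vector `w ≠ 0` stays away from `0`. If
`‖z‖ ≤ 1`, this is because `A` is again bounded below by `1`. If `1 ≤ ‖z‖`, choose `k` with
`w ∈ range (T ^ k)` and `w ∉ range (T ^ (k + 1)) =: M`. The subspace `M` is closed and invariant
under `A`, and `A w - z • w ∈ M`, so the distance from `A ^ n w` to `M` is `‖z‖ ^ n` times the
positive distance from `w` to `M`.
-/

open Filter

noncomputable section

theorem LiYorkeChaotic.exists_ne_zero_forall_exists_norm_pow_apply_lt {X : Type*}
    [NormedAddCommGroup X] [NormedSpace ℂ X] {T : X →L[ℂ] X} (hT : LiYorkeChaotic T) :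
    ∃ w ≠ 0, ∀ c > 0, ∃ n, ‖(T ^ n) w‖ < c := by
  obtain ⟨Γ, hΓ, hpair⟩ := hT
  obtain ⟨x, hx, y, hy, hxy⟩ : Γ.Nontrivial :=
    Set.not_subsingleton_iff.mp fun hs => hΓ hs.countable
  refine ⟨x - y, sub_ne_zero.mpr hxy, fun c hc => ?_⟩
  have hlt : atTop.liminf (fun n => (‖(T ^ n) x - (T ^ n) y‖₊ : ENNReal)) < ENNReal.ofReal c := by
    rw [(hpair x hx y hy hxy).2]
    exact ENNReal.ofReal_pos.mpr hc
  obtain ⟨n, hn⟩ := (frequently_lt_of_liminf_lt (by isBoundedDefault) hlt).exists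
  refine ⟨n, ?_⟩
  rw [map_sub]
  exact (ENNReal.ofReal_lt_ofReal_iff hc).mp ((ofReal_norm _).trans_lt hn)

theorem antilipschitzWith_iterate {α : Type*} [PseudoEMetricSpace α] {K : NNReal} {f : α → α}
    (hf : AntilipschitzWith K f) (n : ℕ) : AntilipschitzWith (K ^ n) f^[n] := by
  induction n with
  | zero => simpa using AntilipschitzWith.id
  | succ n ih =>
    rw [pow_succ', Function.iterate_succ]
    exact ih.comp hf

section Module

variable {R M : Type*}

theorem apply_mem_range_pow_succ [Semiring R] [AddCommMonoid M] [Module R M] {f : Module.End R M}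
    {n : ℕ} {x : M} (hx : x ∈ (f ^ n).range) : f x ∈ (f ^ (n + 1)).range := by
  obtain ⟨y, rfl⟩ := hx
  exact ⟨y, by rw [pow_succ', Module.End.mul_apply]⟩

theorem exists_mem_range_pow_notMem_range_pow_succ [Semiring R] [AddCommMonoid M] [Module R M]
    {f : Module.End R M} (hf : ⨅ n, (f ^ n).range = ⊥) {w : M} (hw : w ≠ 0) :
    ∃ k, w ∈ (f ^ k).range ∧ w ∉ (f ^ (k + 1)).range := by
  have hex : ∃ n, w ∉ (f ^ n).range := by
    by_contra! h
    exact hw ((Submodule.mem_bot R).mp (hf ▸ (Submodule.mem_iInf _).mpr h))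
  simpa only [not_not] using Nat.exists_not_and_succ_of_not_zero_of_exists
    (p := fun n => w ∉ (f ^ n).range) (by simp) hex

theorem pow_smul_one_add_apply_sub_mem [CommRing R] [AddCommGroup M] [Module R M]
    {f : Module.End R M} {p : Submodule R M} (hp : p ∈ f.invtSubmodule) {w : M} (hw : f w ∈ p)
    (z : R) (n : ℕ) : ((z • 1 + f) ^ n) w - z ^ n • w ∈ p := by
  induction n with
  | zero => simp
  | succ n ih =>
    set v := ((z • 1 + f) ^ n) w with hv
    have hsucc : ((z • 1 + f) ^ (n + 1)) w - z ^ (n + 1) • w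
        = z • (v - z ^ n • w) + f (v - z ^ n • w) + z ^ n • f w := by
      simp only [pow_succ', Module.End.mul_apply, ← hv, LinearMap.add_apply, LinearMap.smul_apply,
        Module.End.one_apply, map_sub, map_smul, smul_sub, mul_smul]
      abel
    rw [hsucc]
    exact p.add_mem (p.add_mem (p.smul_mem z ih) (hp ih)) (p.smul_mem _ hw)

end Module

section SmulOneAdd

variable {𝕜 X : Type*}

theorem norm_le_norm_pow_smul_one_add_smul_apply [NormedField 𝕜] [SeminormedAddCommGroup X]
    [NormedSpace 𝕜 X] {T : X →L[𝕜] X} (hT : AntilipschitzWith 1 T) {z μ : 𝕜}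
    (hzμ : 1 + ‖z‖ ≤ ‖μ‖) (n : ℕ) (w : X) :
    ‖w‖ ≤ ‖((z • (1 : X →L[𝕜] X) + μ • T) ^ n) w‖ := by
  set A := z • (1 : X →L[𝕜] X) + μ • T with hA
  have hexpand (x : X) : ‖x‖ ≤ ‖A x‖ := by
    have hTx : ‖x‖ ≤ ‖T x‖ := by simpa using T.bound_of_antilipschitz hT x
    have hreverse : ‖μ‖ * ‖T x‖ - ‖z‖ * ‖x‖ ≤ ‖A x‖ := by
      simpa [hA, norm_smul, add_comm] using norm_sub_norm_le (μ • T x) (-(z • x))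
    have hmul : (1 + ‖z‖) * ‖x‖ ≤ ‖μ‖ * ‖T x‖ := by gcongr
    linarith
  have hanti : AntilipschitzWith 1 A := A.antilipschitz_of_bound (by simpa using hexpand)
  have hpow : AntilipschitzWith 1 (A ^ n) := by simpa using antilipschitzWith_iterate hanti n
  simpa using (A ^ n).bound_of_antilipschitz hpow w

theorem norm_quotient_mk_le_norm_pow_smul_one_add_apply [NormedField 𝕜] [SeminormedAddCommGroup X]
    [NormedSpace 𝕜 X] {T : X →L[𝕜] X} {M : Submodule 𝕜 X}
    (hM : M ∈ Module.End.invtSubmodule (T : X →ₗ[𝕜] X)) {w : X} (hw : T w ∈ M) {z : 𝕜}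
    (hz : 1 ≤ ‖z‖) (n : ℕ) :
    ‖(Submodule.Quotient.mk w : X ⧸ M)‖ ≤ ‖((z • (1 : X →L[𝕜] X) + T) ^ n) w‖ := by
  set v := ((z • (1 : X →L[𝕜] X) + T) ^ n) w with hv
  have hmk : (Submodule.Quotient.mk v : X ⧸ M) = z ^ n • Submodule.Quotient.mk w := by
    refine (Submodule.Quotient.eq M).mpr ?_
    rw [hv, ← ContinuousLinearMap.coe_coe, ContinuousLinearMap.toLinearMap_pow]
    exact pow_smul_one_add_apply_sub_mem hM hw z n
  calc ‖(Submodule.Quotient.mk w : X ⧸ M)‖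
      ≤ ‖z‖ ^ n * ‖(Submodule.Quotient.mk w : X ⧸ M)‖ :=
        le_mul_of_one_le_left (norm_nonneg _) (one_le_pow₀ hz)
    _ = ‖(Submodule.Quotient.mk v : X ⧸ M)‖ := by rw [hmk, norm_smul, norm_pow]
    _ ≤ ‖v‖ := Submodule.Quotient.norm_mk_le M v

variable [NormedField 𝕜] [NormedAddCommGroup X] [NormedSpace 𝕜 X] [CompleteSpace X]
  {T : X →L[𝕜] X}

theorem isClosed_range_pow_of_antilipschitzWith {K : NNReal} (hT : AntilipschitzWith K T) (n : ℕ) :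
    IsClosed ((T ^ n).range : Set X) := by
  have hpow : AntilipschitzWith (K ^ n) (T ^ n) := by
    simpa using antilipschitzWith_iterate hT n
  rw [LinearMap.coe_range]
  exact hpow.isClosed_range (T ^ n).uniformContinuous

theorem exists_pos_forall_le_norm_pow_smul_one_add_smul_apply_of_one_le_norm {K : NNReal}
    (hT : AntilipschitzWith K T) (hrange : ⨅ n, (T ^ n).range = ⊥) {z : 𝕜} (hz : 1 ≤ ‖z‖) (μ : 𝕜)
    {w : X} (hw : w ≠ 0) :
    ∃ c > 0, ∀ n, c ≤ ‖((z • (1 : X →L[𝕜] X) + μ • T) ^ n) w‖ := by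
  simp only [ContinuousLinearMap.toLinearMap_pow] at hrange
  obtain ⟨k, hmem, hnotMem⟩ := exists_mem_range_pow_notMem_range_pow_succ hrange hw
  set M := ((T : X →ₗ[𝕜] X) ^ (k + 1)).range with hM
  have hclosed : IsClosed (M : Set X) := by
    simpa only [hM, ContinuousLinearMap.toLinearMap_pow] using
      isClosed_range_pow_of_antilipschitzWith hT (k + 1)
  have hinvt : M ∈ Module.End.invtSubmodule ((μ • T : X →L[𝕜] X) : X →ₗ[𝕜] X) := fun x hx =>
    M.smul_mem μ ((LinearMap.iterateRange (T : X →ₗ[𝕜] X)).monotone (Nat.le_succ _)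
      (apply_mem_range_pow_succ hx))
  have hpos : 0 < ‖(Submodule.Quotient.mk w : X ⧸ M)‖ := by
    rw [norm_pos_iff]
    simpa using hnotMem
  exact ⟨_, hpos, norm_quotient_mk_le_norm_pow_smul_one_add_apply hinvt
    (M.smul_mem μ (apply_mem_range_pow_succ hmem)) hz⟩

theorem exists_pos_forall_le_norm_pow_smul_one_add_smul_apply (hT : AntilipschitzWith 1 T)
    (hrange : ⨅ n, (T ^ n).range = ⊥) {μ : 𝕜} (hμ : 2 ≤ ‖μ‖) (z : 𝕜) {w : X} (hw : w ≠ 0) :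
    ∃ c > 0, ∀ n, c ≤ ‖((z • (1 : X →L[𝕜] X) + μ • T) ^ n) w‖ := by
  rcases le_total 1 ‖z‖ with hz | hz
  · exact exists_pos_forall_le_norm_pow_smul_one_add_smul_apply_of_one_le_norm hT hrange hz μ hw
  · exact ⟨‖w‖, norm_pos_iff.mpr hw, fun n =>
      norm_le_norm_pow_smul_one_add_smul_apply hT (by linarith) n w⟩

end SmulOneAdd

section Shift

variable {𝕜 E : Type*} [NormedField 𝕜] [NormedAddCommGroup E] [NormedSpace 𝕜 E] {p : ENNReal}

theorem lp_norm_eq_norm_of_shift (hp : p ≠ 0) {x y : lp (fun _ : ℕ => E) p}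
    (hzero : y 0 = 0) (hsucc : ∀ n, y (n + 1) = x n) : ‖y‖ = ‖x‖ := by
  rcases eq_or_ne p ⊤ with rfl | hp_top
  · refine le_antisymm (lp.norm_le_of_forall_le (norm_nonneg x) fun n => ?_)
      (lp.norm_le_of_forall_le (norm_nonneg y) fun n => ?_)
    · cases n with
      | zero => simp [hzero]
      | succ n => exact hsucc n ▸ lp.norm_apply_le_norm hp x n
    · exact hsucc n ▸ lp.norm_apply_le_norm hp y (n + 1)
  · have hp_pos : 0 < p.toReal := ENNReal.toReal_pos hp hp_top
    rw [lp.norm_eq_tsum_rpow hp_pos, lp.norm_eq_tsum_rpow hp_pos,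
      ((lp.memℓp y).summable hp_pos).tsum_eq_zero_add]
    simp [hzero, hsucc, hp_pos.ne']

variable [Fact (1 ≤ p)] {T : lp (fun _ : ℕ => E) p →L[𝕜] lp (fun _ : ℕ => E) p}

theorem isometry_shift (hT : ∀ x, T x 0 = 0 ∧ ∀ n, T x (n + 1) = x n) : Isometry T :=
  AddMonoidHomClass.isometry_of_norm T fun x =>
    lp_norm_eq_norm_of_shift (zero_lt_one.trans_le Fact.out).ne' (hT x).1 (hT x).2

theorem shift_pow_apply_eq_zero (hT : ∀ x, T x 0 = 0 ∧ ∀ n, T x (n + 1) = x n)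
    (x : lp (fun _ : ℕ => E) p) {n j : ℕ} (hj : j < n) : (T ^ n) x j = 0 := by
  induction n generalizing j with
  | zero => exact absurd hj j.not_lt_zero
  | succ n ih =>
    rw [pow_succ', mul_apply_eq_comp]
    cases j with
    | zero => exact (hT _).1
    | succ j => exact ((hT _).2 j).trans (ih (Nat.lt_of_succ_lt_succ hj))

theorem iInf_range_shift_pow (hT : ∀ x, T x 0 = 0 ∧ ∀ n, T x (n + 1) = x n) :
    ⨅ n, (T ^ n).range = ⊥ := by
  refine (Submodule.eq_bot_iff _).mpr fun x hx => lp.ext (funext fun j => ?_)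
  obtain ⟨y, rfl⟩ := (Submodule.mem_iInf _).mp hx (j + 1)
  exact shift_pow_apply_eq_zero hT y j.lt_succ_self

end Shift

theorem SLY_two_smul_shift_eq_empty_general {X : Type*} [NormedAddCommGroup X] [NormedSpace ℂ X]
    [CompleteSpace X] {T : X →L[ℂ] X} (hT : AntilipschitzWith 1 T)
    (hrange : ⨅ n, (T ^ n).range = ⊥) {μ : ℂ} (hμ : 2 ≤ ‖μ‖) : SLY (μ • T) = ∅ := by
  refine Set.eq_empty_iff_forall_notMem.mpr fun z hz => ?_
  obtain ⟨w, hw, hsmall⟩ := hz.exists_ne_zero_forall_exists_norm_pow_apply_lt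
  obtain ⟨c, hc, hlower⟩ :=
    exists_pos_forall_le_norm_pow_smul_one_add_smul_apply hT hrange hμ z hw
  obtain ⟨n, hn⟩ := hsmall c hc
  exact (hlower n).not_gt hn

theorem SLY_two_smul_shift_eq_empty
    (T : lp (fun _ : ℕ => ℂ) 2 →L[ℂ] lp (fun _ : ℕ => ℂ) 2)
    (hT : ∀ x : lp (fun _ : ℕ => ℂ) 2,
      (T x : ℕ → ℂ) 0 = 0 ∧ ∀ n : ℕ, (T x : ℕ → ℂ) (n + 1) = (x : ℕ → ℂ) n) :
    SLY ((2 : ℂ) • T) = ∅ :=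
  SLY_two_smul_shift_eq_empty_general
    (isometry_shift hT).antilipschitz (iInf_range_shift_pow hT) (by simp)
end
end

section
/- Let S be the Kalisch operator on L²[0,2π]. For every w ∈ ℂ, every positive integer n, and every f ∈ L²[0,2π], one has, for almost every θ ∈ [0,2π]: ((w·I + S)ⁿ f)(θ) = (w + e^{iθ})ⁿ f(θ) − n ∫₀^θ i e^{it} (w + e^{it})^{n−1} f(t) dt. -/
open Filter

noncomputable section

open MeasureTheory Real in
/-- Lebesgue measure restricted to `[0, 2π]`. -/
def muK : Measure ℝ := volume.restrict (Set.Icc 0 (2 * π))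

/-! For a `C¹` symbol `u`, put `T_u f = u f - ∫ₐ u' f`. If `f` is itself `C¹`, then
`T_u f = u(a) f(a) + ∫ₐ u f'`, so `T_u` is multiplication by `u` on derivatives. This is why
`T_{uv} = T_u T_v`; for merely integrable `f` the identity is an integration by parts,
`∫ₐ u' H = u H - ∫ₐ u v' f` with `H = ∫ₐ v' f`, which Fubini's theorem on a triangle gives. The
operator `w I + S` is `T_{w + φ}` with `φ(θ) = exp (i θ)`, hence its `n`-th power is
`T_{(w + φ)ⁿ}`. -/

section KalischTransform

open MeasureTheory Set

variable {𝕜 E : Type*} [RCLike 𝕜] [NormedAddCommGroup E] [NormedSpace ℝ E] {a b θ : ℝ}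

theorem intervalIntegral_triangle_swap {μ ν : Measure ℝ} [SFinite μ] [SFinite ν]
    [NullSingletonClass μ] {F : ℝ → ℝ → E} (hab : a ≤ b)
    (hF : Integrable (Function.uncurry F) ((μ.restrict (Ioc a b)).prod (ν.restrict (Ioc a b)))) :
    ∫ s in a..b, ∫ t in a..s, F s t ∂ν ∂μ = ∫ t in a..b, ∫ s in t..b, F s t ∂μ ∂ν := by
  let D : Set (ℝ × ℝ) := {z | z.2 ≤ z.1}
  let G : ℝ → ℝ → E := fun s t => D.indicator (Function.uncurry F) (s, t)
  have hG : Integrable (Function.uncurry G)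
      ((μ.restrict (Ioc a b)).prod (ν.restrict (Ioc a b))) :=
    hF.indicator (measurableSet_le measurable_snd measurable_fst)
  have slice_fst : ∀ s ∈ Ioc a b, ∫ t in Ioc a b, G s t ∂ν = ∫ t in a..s, F s t ∂ν := by
    intro s hs
    have hGs : G s = (Iic s).indicator (F s) := by
      ext t; simp [G, D, indicator_apply]
    rw [hGs, setIntegral_indicator measurableSet_Iic, Ioc_inter_Iic, min_eq_right hs.2,
      intervalIntegral.integral_of_le hs.1.le]
  have slice_snd : ∀ t ∈ Ioc a b, ∫ s in Ioc a b, G s t ∂μ = ∫ s in t..b, F s t ∂μ := by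
    intro t ht
    have hGt : (G · t) = (Ici t).indicator (F · t) := by
      ext s; simp [G, D, indicator_apply]
    have hIcc : Ioc a b ∩ Ici t = Icc t b := by
      ext s; simp only [mem_inter_iff, mem_Ioc, mem_Ici, mem_Icc]; grind
    rw [hGt, setIntegral_indicator measurableSet_Ici, hIcc, integral_Icc_eq_integral_Ioc,
      intervalIntegral.integral_of_le ht.2]
  rw [intervalIntegral.integral_of_le hab, intervalIntegral.integral_of_le hab,
    ← setIntegral_congr_fun measurableSet_Ioc slice_fst,
    ← setIntegral_congr_fun measurableSet_Ioc slice_snd]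
  exact integral_integral_swap hG

theorem intervalIntegral_restrict_Icc (f : ℝ → E) (hθ : θ ∈ Icc a b) :
    ∫ t in a..θ, f t ∂volume.restrict (Icc a b) = ∫ t in a..θ, f t := by
  have hsub : Ioc a θ ⊆ Icc a b := Ioc_subset_Icc_self.trans (Icc_subset_Icc_right hθ.2)
  rw [intervalIntegral.integral_of_le hθ.1, intervalIntegral.integral_of_le hθ.1,
    Measure.restrict_restrict_of_subset hsub]

variable [NormedSpace 𝕜 E]

theorem integral_deriv_smul_primitive [CompleteSpace E] {u : ℝ → 𝕜} {h : ℝ → E} (hab : a ≤ b)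
    (hu : ContDiff ℝ 1 u) (hh : IntervalIntegrable h volume a b) :
    ∫ s in a..b, deriv u s • ∫ t in a..s, h t =
      u b • (∫ t in a..b, h t) - ∫ t in a..b, u t • h t := by
  have hu' : Continuous (deriv u) := hu.continuous_deriv le_rfl
  have hFubini : Integrable (Function.uncurry fun s t => deriv u s • h t)
      ((volume.restrict (Ioc a b)).prod (volume.restrict (Ioc a b))) :=
    Integrable.smul_prod (hu'.integrableOn_Icc.mono_set Ioc_subset_Icc_self) hh.1
  calc ∫ s in a..b, deriv u s • ∫ t in a..s, h t
      = ∫ s in a..b, ∫ t in a..s, deriv u s • h t := by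
        simp only [intervalIntegral.integral_smul]
    _ = ∫ t in a..b, ∫ s in t..b, deriv u s • h t := intervalIntegral_triangle_swap hab hFubini
    _ = ∫ t in a..b, (u b • h t - u t • h t) := by
        have ftc (t : ℝ) : ∫ s in t..b, deriv u s = u b - u t :=
          intervalIntegral.integral_deriv_eq_sub
            (fun s _ => hu.differentiable one_ne_zero s) (hu'.intervalIntegrable t b)
        simp only [intervalIntegral.integral_smul_const, ftc, sub_smul]
    _ = u b • (∫ t in a..b, h t) - ∫ t in a..b, u t • h t := by
        have hub : IntervalIntegrable (fun t => u b • h t) volume a b := hh.smul (u b)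
        rw [intervalIntegral.integral_sub hub
          (hh.continuousOn_smul hu.continuous.continuousOn), intervalIntegral.integral_smul]

/-- The Kalisch transform `u f - ∫ₐ u' f` with symbol `u` and base point `a`, on functions. The
Kalisch operator of the paper has symbol `θ ↦ exp (i θ)` and base point `0`. -/
def kalischTransform (a : ℝ) (u : ℝ → 𝕜) (f : ℝ → E) (θ : ℝ) : E :=
  u θ • f θ - ∫ t in a..θ, deriv u t • f t

theorem kalischTransform_one (f : ℝ → E) : kalischTransform a (1 : ℝ → 𝕜) f = f := by
  ext θ
  simp [kalischTransform]

theorem kalischTransform_const_add (w : 𝕜) (u : ℝ → 𝕜) (f : ℝ → E) :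
    kalischTransform a (fun t => w + u t) f = w • f + kalischTransform a u f := by
  ext θ
  simp only [kalischTransform, deriv_const_add, Pi.add_apply, Pi.smul_apply, add_smul,
    add_sub_assoc]

theorem kalischTransform_congr_ae {u : ℝ → 𝕜} {f g : ℝ → E}
    (hfg : f =ᵐ[volume.restrict (Icc a b)] g) :
    kalischTransform a u f =ᵐ[volume.restrict (Icc a b)] kalischTransform a u g := by
  filter_upwards [hfg, ae_restrict_mem measurableSet_Icc] with θ hfgθ hθ
  have hint : ∫ t in a..θ, deriv u t • f t = ∫ t in a..θ, deriv u t • g t := by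
    rw [← intervalIntegral_restrict_Icc _ hθ, ← intervalIntegral_restrict_Icc _ hθ]
    exact intervalIntegral.integral_congr_ae (hfg.mono fun t ht _ => by rw [ht])
  rw [kalischTransform, kalischTransform, hfgθ, hint]

theorem kalischTransform_mul [CompleteSpace E] {u v : ℝ → 𝕜} {f : ℝ → E}
    (hu : ContDiff ℝ 1 u) (hv : ContDiff ℝ 1 v) (hf : IntervalIntegrable f volume a θ)
    (hθ : a ≤ θ) :
    kalischTransform a (u * v) f θ = kalischTransform a u (kalischTransform a v f) θ := by
  have hu' : Continuous (deriv u) := hu.continuous_deriv le_rfl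
  have hv' : Continuous (deriv v) := hv.continuous_deriv le_rfl
  have hv'f : IntervalIntegrable (fun t => deriv v t • f t) volume a θ :=
    hf.continuousOn_smul hv'.continuousOn
  have hu'vf : IntervalIntegrable (fun t => deriv u t • v t • f t) volume a θ :=
    (hf.continuousOn_smul hv.continuous.continuousOn).continuousOn_smul hu'.continuousOn
  have huv'f : IntervalIntegrable (fun t => u t • deriv v t • f t) volume a θ :=
    hv'f.continuousOn_smul hu.continuous.continuousOn
  have hu'_primitive :
      IntervalIntegrable (fun s => deriv u s • ∫ t in a..s, deriv v t • f t) volume a θ :=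
    (hu'.continuousOn.smul (intervalIntegral.continuousOn_primitive_interval' hv'f
      left_mem_uIcc)).intervalIntegrable
  have hderiv (t : ℝ) : deriv (u * v) t = deriv u t * v t + u t * deriv v t :=
    deriv_mul (hu.differentiable one_ne_zero t) (hv.differentiable one_ne_zero t)
  simp only [kalischTransform, hderiv, Pi.mul_apply, smul_sub, add_smul, mul_smul]
  rw [intervalIntegral.integral_add hu'vf huv'f, intervalIntegral.integral_sub hu'vf hu'_primitive,
    integral_deriv_smul_primitive hθ hu hv'f]
  abel

section Lp

variable {p : ENNReal} {u v : ℝ → 𝕜}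

/-- The bounded operator `T` on `Lᵖ[a, b]` acts almost everywhere as the Kalisch transform with
symbol `u` and base point `a`. -/
def IsKalischOperator [Fact (1 ≤ p)] (u : ℝ → 𝕜)
    (T : Lp E p (volume.restrict (Icc a b)) →L[𝕜] Lp E p (volume.restrict (Icc a b))) : Prop :=
  ∀ f, T f =ᵐ[volume.restrict (Icc a b)] kalischTransform a u f

namespace IsKalischOperator

variable [Fact (1 ≤ p)]
  {S T : Lp E p (volume.restrict (Icc a b)) →L[𝕜] Lp E p (volume.restrict (Icc a b))}

theorem one : IsKalischOperator (1 : ℝ → 𝕜)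
    (1 : Lp E p (volume.restrict (Icc a b)) →L[𝕜] Lp E p (volume.restrict (Icc a b))) := by
  intro f
  rw [kalischTransform_one, one_apply_eq_self]

theorem const_add (hT : IsKalischOperator u T) (w : 𝕜) :
    IsKalischOperator (fun t => w + u t) (w • 1 + T) := by
  intro f
  rw [kalischTransform_const_add]
  exact (Lp.coeFn_add _ _).trans ((Lp.coeFn_smul w f).add (hT f))

theorem mul [CompleteSpace E] (hS : IsKalischOperator u S) (hT : IsKalischOperator v T)
    (hu : ContDiff ℝ 1 u) (hv : ContDiff ℝ 1 v) : IsKalischOperator (u * v) (S * T) := by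
  intro f
  have hf : IntegrableOn f (Icc a b) := (Lp.memLp f).integrable Fact.out
  filter_upwards [hS (T f), kalischTransform_congr_ae (u := u) (hT f),
    ae_restrict_mem measurableSet_Icc] with θ hSθ hTθ hθ
  have hfθ : IntervalIntegrable f volume a θ :=
    (intervalIntegrable_iff_integrableOn_Icc_of_le hθ.1).2
      (hf.mono_set (Icc_subset_Icc_right hθ.2))
  rw [kalischTransform_mul hu hv hfθ hθ.1, ← hTθ, ← hSθ]
  rfl

theorem pow [CompleteSpace E] (hT : IsKalischOperator u T) (hu : ContDiff ℝ 1 u) (n : ℕ) :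
    IsKalischOperator (u ^ n) (T ^ n) := by
  induction n with
  | zero => simpa only [pow_zero] using one
  | succ n ih => simpa only [pow_succ] using ih.mul hT (hu.pow n) hu

end IsKalischOperator

theorem kalisch_pow_apply_general [CompleteSpace E] [Fact (1 ≤ p)] {φ : ℝ → 𝕜}
    (hφ : ContDiff ℝ 1 φ)
    (S : Lp E p (volume.restrict (Icc a b)) →L[𝕜] Lp E p (volume.restrict (Icc a b)))
    (hS : ∀ f, ∀ᵐ θ ∂volume.restrict (Icc a b),
      S f θ = φ θ • f θ - ∫ t in a..θ, deriv φ t • f t ∂volume.restrict (Icc a b))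
    (w : 𝕜) (n : ℕ) (f : Lp E p (volume.restrict (Icc a b))) :
    ∀ᵐ θ ∂volume.restrict (Icc a b),
      ((w • 1 + S) ^ n) f θ = (w + φ θ) ^ n • f θ -
        (n : 𝕜) • ∫ t in a..θ, (deriv φ t * (w + φ t) ^ (n - 1)) • f t
          ∂volume.restrict (Icc a b) := by
  have hSφ : IsKalischOperator φ S := by
    intro f
    filter_upwards [hS f, ae_restrict_mem measurableSet_Icc] with θ hSθ hθ
    rw [hSθ, intervalIntegral_restrict_Icc _ hθ, kalischTransform]
  have hψ : ContDiff ℝ 1 fun t => w + φ t := contDiff_const.add hφ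
  have hderiv (t : ℝ) :
      deriv ((fun t => w + φ t) ^ n) t = n * (deriv φ t * (w + φ t) ^ (n - 1)) := by
    rw [deriv_pow (hψ.differentiable one_ne_zero t), deriv_const_add]
    ring
  filter_upwards [(hSφ.const_add w).pow hψ n f, ae_restrict_mem measurableSet_Icc] with θ hpow hθ
  rw [hpow, intervalIntegral_restrict_Icc _ hθ, ← intervalIntegral.integral_smul]
  simp only [kalischTransform, hderiv, Pi.pow_apply, mul_smul]

end Lp

end KalischTransform

theorem contDiff_cexp_I_mul : ContDiff ℝ 1 fun t : ℝ => Complex.exp (Complex.I * t) :=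
  (contDiff_const.mul Complex.ofRealCLM.contDiff).cexp

theorem deriv_cexp_I_mul (t : ℝ) :
    deriv (fun s : ℝ => Complex.exp (Complex.I * s)) t =
      Complex.I * Complex.exp (Complex.I * t) := by
  simpa [mul_comm] using ((Complex.ofRealCLM.hasDerivAt (x := t)).const_mul Complex.I).cexp.deriv

open MeasureTheory Real in
theorem kalisch_pow_apply
    (S : Lp ℂ 2 muK →L[ℂ] Lp ℂ 2 muK)
    (hS : ∀ f : Lp ℂ 2 muK, ∀ᵐ θ ∂muK,
      (S f : ℝ → ℂ) θ = Complex.exp (Complex.I * θ) * (f : ℝ → ℂ) θ -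
        ∫ t in (0 : ℝ)..θ, Complex.I * Complex.exp (Complex.I * t) * (f : ℝ → ℂ) t ∂muK)
    (w : ℂ) (n : ℕ) (hn : 0 < n) (f : Lp ℂ 2 muK) :
    ∀ᵐ θ ∂muK,
      (((w • (1 : Lp ℂ 2 muK →L[ℂ] Lp ℂ 2 muK) + S) ^ n) f : ℝ → ℂ) θ =
        (w + Complex.exp (Complex.I * θ)) ^ n * (f : ℝ → ℂ) θ -
          (n : ℂ) * ∫ t in (0 : ℝ)..θ, Complex.I * Complex.exp (Complex.I * t) *
            (w + Complex.exp (Complex.I * t)) ^ (n - 1) * (f : ℝ → ℂ) t ∂muK := by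
  have h_general := kalisch_pow_apply_general contDiff_cexp_I_mul S
  simp only [deriv_cexp_I_mul, smul_eq_mul] at h_general
  exact h_general hS w n f
end
end
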